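/- For every n ∈ ℕ, m ∈ {0,…,n−1}, s > m and 0 < α ≤ 1 there exists a constant c = c(n,m,s,α) > 0 such that for every finite Borel regular measure μ on ℝⁿ with lower Hausdorff dimension dim_H(μ) ≥ s, for μ-almost every x ∈ ℝⁿ one has limsup_{r↓0} inf_{θ ∈ S^{n-1}, V ∈ G(n,n−m)} μ(X(x,r,V,α) \ H(x,θ,α)) / μ(B(x,r)) > c. -/

import Mathlib

/-!
Suppose that the estimate with constant `c` fails at all points of a set `D` of positive measure, at
all scales below some `r₁`. Cut space into cubes of side `1 / Λ` and each of these into `N ^ n`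
subcubes.

At a point of a subcube, call the point heavy if the much smaller cube around it carries more than
the proportion `c` of the mass nearby. If more than a constant times `N ^ m` subcubes of one cube
contained heavy points of `D`, a pigeonhole argument would produce many such points, spread out at
the scale of the subcubes, at which the planes `V` nearly agree and which lie close to one translate
of that common plane; a Ramsey argument for the directions between them then gives one point `y`
such that for every `θ` some other one, `z`, lies well inside `X(y, V, α) \ H(y, θ, α)`, together
with its small heavy cube. That contradicts the failure of the estimate at `y`.

For small `c` only a small proportion of the mass of `D` fails to be heavy at a given scale, so a
substantial part of `D` consists of points which, at infinitely many generations, have met only few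
subcubes without heavy points. Counting cubes by means of weights that are multiplied by `1` at a
heavy generation and by `N ^ (-n)` otherwise bounds the dimension of that part by any number larger
than `m`, once `N` is large. Since `m < s`, this is impossible if `μ` has lower dimension at least
`s`.
-/

open MeasureTheory Metric Filter Set
open scoped RealInnerProductSpace ENNReal

/-- The almost half-space `H(x,θ,α) = {y : (y-x)·θ > α|y-x|}`. -/
def almostHalfSpace {n : ℕ} (x θ : EuclideanSpace ℝ (Fin n)) (α : ℝ) :
    Set (EuclideanSpace ℝ (Fin n)) :=
  {y | α * ‖y - x‖ < ⟪y - x, θ⟫}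

/-- The two-sided cone `X(x,V,α) = {y : dist(y-x,V) < α|y-x|}`. -/
def coneX {n : ℕ} (x : EuclideanSpace ℝ (Fin n))
    (V : Submodule ℝ (EuclideanSpace ℝ (Fin n))) (α : ℝ) :
    Set (EuclideanSpace ℝ (Fin n)) :=
  {y | infDist (y - x) (V : Set (EuclideanSpace ℝ (Fin n))) < α * ‖y - x‖}

/-- The (lower) Hausdorff dimension of a measure. -/
noncomputable def measDimH {n : ℕ} (μ : Measure (EuclideanSpace ℝ (Fin n))) : ℝ≥0∞ :=
  ⨅ (A : Set (EuclideanSpace ℝ (Fin n))) (_ : MeasurableSet A) (_ : 0 < μ A), dimH A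

section Combinatorics

lemma exists_path_of_two_pow_card_lt {ι C : Type*} {F : Finset ι} {T : Finset C}
    {col : ι → ι → C} (hcol : ∀ x ∈ F, ∀ y ∈ F, col x y ∈ T) (hcard : 2 ^ T.card < F.card) :
    ∃ x ∈ F, ∃ y ∈ F, ∃ z ∈ F, x ≠ y ∧ y ≠ z ∧ col x y = col y z := by
  classical
  let _ : LinearOrder ι := linearOrderOfSTO WellOrderingRel
  -- If the colours occurring on edges that end at `y` and at `z > y` agree, then the colour of
  -- the edge from `y` to `z` also occurs on some edge that ends at `y`.
  let incoming : ι → Finset C := fun y => T.filter fun c => ∃ x ∈ F, x < y ∧ col x y = c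
  have key : ∀ y ∈ F, ∀ z ∈ F, incoming y = incoming z → y < z →
      ∃ x ∈ F, ∃ y ∈ F, ∃ z ∈ F, x ≠ y ∧ y ≠ z ∧ col x y = col y z := by
    intro y hy z hz heq hyz
    have hmem : col y z ∈ incoming y :=
      heq ▸ Finset.mem_filter.2 ⟨hcol y hy z hz, y, hy, hyz, rfl⟩
    obtain ⟨x, hx, hxy, hc⟩ := (Finset.mem_filter.1 hmem).2
    exact ⟨x, hx, y, hy, z, hz, hxy.ne, hyz.ne, hc⟩
  obtain ⟨y, hy, z, hz, hne, heq⟩ := Finset.exists_ne_map_eq_of_card_lt_of_maps_to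
    (by rwa [Finset.card_powerset])
    (fun y _ => Finset.mem_powerset.2 (Finset.filter_subset _ _) :
      Set.MapsTo incoming F T.powerset)
  rcases hne.lt_or_gt with h | h
  exacts [key y hy z hz heq h, key z hz y hy heq.symm h]

lemma exists_sparse_subset {ι : Type*} [Fintype ι] (G : Finset (ι → ℤ)) {b : ℕ}
    (hb : 2 ^ Fintype.card ι * b < G.card) :
    ∃ B ⊆ G, b < B.card ∧ ∀ p ∈ B, ∀ q ∈ B, p ≠ q → ∃ i, 2 ≤ |p i - q i| := by
  classical
  obtain ⟨e, -, he⟩ := Finset.exists_lt_card_fiber_of_mul_lt_card_of_maps_to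
    (s := G) (t := Finset.univ) (f := fun p i => (p i : ZMod 2)) (n := b)
    (fun _ _ => Finset.mem_univ _) (by simpa using hb)
  refine ⟨_, Finset.filter_subset _ _, he, fun p hp q hq hpq => ?_⟩
  obtain ⟨i, hi⟩ := Function.ne_iff.1 hpq
  have hpar : ((p i : ℤ) : ZMod 2) = (q i : ZMod 2) :=
    congrFun ((Finset.mem_filter.1 hp).2.trans (Finset.mem_filter.1 hq).2.symm) i
  have hdvd : (2 : ℤ) ∣ p i - q i := by
    rw [← dvd_neg, neg_sub]
    exact (ZMod.intCast_eq_intCast_iff_dvd_sub _ _ 2).1 hpar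
  exact ⟨i, Int.le_of_dvd (abs_pos.2 (sub_ne_zero.2 hi)) ((dvd_abs _ _).2 hdvd)⟩

lemma exists_finset_forall_dist_lt_of_isCompact {X : Type*} [PseudoMetricSpace X] {K : Set X}
    (hK : IsCompact K) {ε : ℝ} (hε : 0 < ε) :
    ∃ T : Finset X, ↑T ⊆ K ∧ ∀ x ∈ K, ∃ t ∈ T, dist x t < ε := by
  obtain ⟨t, htK, ht, hcover⟩ := hK.finite_cover_balls hε
  refine ⟨ht.toFinset, by rwa [ht.coe_toFinset], fun x hx => ?_⟩
  obtain ⟨y, hy, hxy⟩ := mem_iUnion₂.1 (hcover hx)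
  exact ⟨y, ht.mem_toFinset.2 hy, hxy⟩

lemma exists_subset_dist_lt_of_card_lt {X : Type*} [PseudoMetricSpace X] {K : Set X}
    (hK : IsCompact K) {ε : ℝ} (hε : 0 < ε) :
    ∃ k : ℕ, ∀ {ι : Type*} (F : Finset ι) (f : ι → X), Set.MapsTo f F K → ∀ b, k * b < F.card →
      ∃ B ⊆ F, b < B.card ∧ ∃ t ∈ K, ∀ i ∈ B, dist (f i) t < ε := by
  classical
  obtain ⟨T, hTK, hnet⟩ := exists_finset_forall_dist_lt_of_isCompact hK hε
  refine ⟨T.card, fun F f hf b hb => ?_⟩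
  obtain ⟨i₀, -⟩ : F.Nonempty := Finset.card_pos.1 ((Nat.zero_le _).trans_lt hb)
  have : Nonempty X := ⟨f i₀⟩
  choose! near hnear hdist using fun i (hi : i ∈ F) => hnet (f i) (hf hi)
  obtain ⟨t, ht, hfib⟩ := Finset.exists_lt_card_fiber_of_mul_lt_card_of_maps_to hnear hb
  refine ⟨_, Finset.filter_subset _ _, hfib, t, hTK ht, fun i hi => ?_⟩
  obtain ⟨hiF, rfl⟩ := Finset.mem_filter.1 hi
  exact hdist i hiF

end Combinatorics

section Grid

variable {n : ℕ}

/-- The index of the half-open cube of side `1 / L` of the grid `L⁻¹ ℤⁿ` that contains `x`; the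
cube with index `q` is the fibre `gridCode L ⁻¹' {q}`. For `N : ℕ`, the cube of side `1 / L` that
contains the cube of side `1 / (L * N)` with index `p` has index `p / N`. -/
noncomputable def gridCode (L : ℝ) (x : EuclideanSpace ℝ (Fin n)) : Fin n → ℤ :=
  fun i => ⌊L * x i⌋

/-- The indices of the `N ^ n` cubes of side `1 / (L * N)` contained in the cube of side `1 / L`
with index `q`. -/
noncomputable def gridChildren (N : ℕ) (q : Fin n → ℤ) : Finset (Fin n → ℤ) :=
  Finset.Icc (N * q) (N * q + (N - 1))

lemma mem_gridChildren {N : ℕ} (hN : 0 < N) {p q : Fin n → ℤ} :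
    p ∈ gridChildren N q ↔ p / (N : Fin n → ℤ) = q := by
  have hN' : (0 : ℤ) < N := by exact_mod_cast hN
  simp only [gridChildren, Finset.mem_Icc, Pi.le_def, ← forall_and, funext_iff]
  refine forall_congr' fun i => ?_
  simp only [Pi.mul_apply, Pi.add_apply, Pi.sub_apply, Pi.one_apply, Pi.natCast_apply,
    Pi.div_apply, Int.ediv_eq_iff_of_pos hN']
  constructor <;> rintro ⟨h₁, h₂⟩ <;> constructor <;> linarith

lemma card_gridChildren (N : ℕ) (q : Fin n → ℤ) : (gridChildren N q).card = N ^ n := by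
  have h (i : Fin n) : ((N : ℤ) * q i + (N - 1) + 1 - N * q i).toNat = N := by
    rw [add_assoc, sub_add_cancel, add_sub_cancel_left, Int.toNat_natCast]
  simp [gridChildren, Pi.card_Icc, h]

lemma card_Icc_neg_natCast (B : ℕ) :
    (Finset.Icc (-(B : Fin n → ℤ)) B).card = (2 * B + 1) ^ n := by
  have h : ((B : ℤ) + 1 + B).toNat = 2 * B + 1 := by lia
  simp [Pi.card_Icc, h]

lemma mem_Icc_neg_natCast {B : ℕ} {p : Fin n → ℤ} :
    p ∈ Finset.Icc (-(B : Fin n → ℤ)) B ↔ ∀ i, |p i| ≤ B := by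
  simp [Finset.mem_Icc, Pi.le_def, abs_le, forall_and]

lemma gridCode_mul_natCast_div {N : ℕ} (hN : 0 < N) (L : ℝ) (x : EuclideanSpace ℝ (Fin n)) :
    gridCode (L * N) x / (N : Fin n → ℤ) = gridCode L x := by
  funext i
  simp only [gridCode, Pi.div_apply, Pi.natCast_apply]
  rw [mul_comm L, mul_assoc, Int.natCast_mul_floor_div_cancel hN.ne']

lemma measurable_gridCode (L : ℝ) :
    Measurable (gridCode L : EuclideanSpace ℝ (Fin n) → Fin n → ℤ) := by
  unfold gridCode
  fun_prop

lemma abs_mul_sub_mul_le {L : ℝ} (hL : 0 ≤ L) (x y : EuclideanSpace ℝ (Fin n)) (i : Fin n) :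
    |L * x i - L * y i| ≤ L * ‖x - y‖ := by
  rw [← mul_sub, abs_mul, abs_of_nonneg hL]
  exact mul_le_mul_of_nonneg_left (PiLp.norm_apply_le (x - y) i) hL

lemma norm_sub_le_of_gridCode_eq {L : ℝ} (hL : 0 < L) {x y : EuclideanSpace ℝ (Fin n)}
    (h : gridCode L x = gridCode L y) : ‖x - y‖ ≤ n / L := by
  have hcoord (i : Fin n) : ‖(x - y) i‖ ≤ 1 / L := by
    have := Int.abs_sub_lt_one_of_floor_eq_floor (congrFun h i)
    rw [← mul_sub, abs_mul, abs_of_pos hL] at this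
    rw [le_div_iff₀ hL, mul_comm]
    exact this.le
  calc ‖x - y‖ = ‖∑ i, (x - y) i • EuclideanSpace.basisFun (Fin n) ℝ i‖ :=
        congrArg norm ((EuclideanSpace.basisFun (Fin n) ℝ).sum_repr (x - y)).symm
    _ ≤ ∑ _i : Fin n, 1 / L := norm_sum_le_of_le _ fun i _ => by
        simpa [norm_smul] using hcoord i
    _ = n / L := by simp [div_eq_mul_inv]

lemma gridCode_sub_mem_Icc {L r : ℝ} (hL : 0 ≤ L) {x y : EuclideanSpace ℝ (Fin n)}
    (h : ‖x - y‖ ≤ r) :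
    gridCode L x - gridCode L y ∈
      Finset.Icc (-((⌈L * r⌉₊ + 1 : ℕ) : Fin n → ℤ)) (⌈L * r⌉₊ + 1 : ℕ) := by
  refine mem_Icc_neg_natCast.2 fun i => ?_
  have hdist : |L * x i - L * y i| ≤ ⌈L * r⌉₊ :=
    (abs_mul_sub_mul_le hL x y i).trans <|
      (mul_le_mul_of_nonneg_left h hL).trans (Nat.le_ceil _)
  have hx := Int.floor_le (L * x i)
  have hy := Int.floor_le (L * y i)
  have hx' := Int.lt_floor_add_one (L * x i)
  have hy' := Int.lt_floor_add_one (L * y i)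
  rw [← Int.cast_le (R := ℝ)]
  simp only [gridCode, Pi.sub_apply]
  push_cast
  rw [abs_le] at hdist ⊢
  constructor <;> linarith

lemma gridCode_mem_Icc {L r : ℝ} (hL : 0 ≤ L) {x : EuclideanSpace ℝ (Fin n)} (h : ‖x‖ ≤ r) :
    gridCode L x ∈ Finset.Icc (-((⌈L * r⌉₊ + 1 : ℕ) : Fin n → ℤ)) (⌈L * r⌉₊ + 1 : ℕ) := by
  have hzero : gridCode L (0 : EuclideanSpace ℝ (Fin n)) = 0 := by
    funext i
    simp [gridCode]
  simpa only [hzero, sub_zero] using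
    gridCode_sub_mem_Icc (y := (0 : EuclideanSpace ℝ (Fin n))) hL (by rwa [sub_zero])

lemma one_div_le_norm_sub_of_two_le_abs_gridCode_sub {L : ℝ} (hL : 0 < L)
    {x y : EuclideanSpace ℝ (Fin n)} {i : Fin n}
    (h : 2 ≤ |gridCode L x i - gridCode L y i|) : 1 / L ≤ ‖x - y‖ := by
  rw [div_le_iff₀' hL]
  refine le_trans ?_ (abs_mul_sub_mul_le hL.le x y i)
  have hx := Int.floor_le (L * x i)
  have hy := Int.floor_le (L * y i)
  have hx' := Int.lt_floor_add_one (L * x i)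
  have hy' := Int.lt_floor_add_one (L * y i)
  rw [← Int.cast_le (R := ℝ)] at h
  simp only [gridCode] at h
  push_cast at h
  rw [le_abs] at h ⊢
  rcases h with h | h
  · left; linarith
  · right; linarith

lemma exists_subset_norm_sub_le_of_card_lt {ι : Type*} {F : Finset ι}
    {g : ι → EuclideanSpace ℝ (Fin n)} {R η : ℝ} (hη : 0 < η)
    (hg : ∀ i ∈ F, ∀ j ∈ F, ‖g i - g j‖ ≤ R) {b : ℕ}
    (hb : (2 * (⌈R / η⌉₊ + 1) + 1) ^ n * b < F.card) :
    ∃ B ⊆ F, b < B.card ∧ ∀ i ∈ B, ∀ j ∈ B, ‖g i - g j‖ ≤ n * η := by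
  classical
  obtain ⟨i₀, hi₀⟩ : F.Nonempty := Finset.card_pos.1 ((Nat.zero_le _).trans_lt hb)
  rw [← card_Icc_neg_natCast, ← one_div_mul_eq_div] at hb
  obtain ⟨q, -, hfib⟩ := Finset.exists_lt_card_fiber_of_mul_lt_card_of_maps_to
    (fun i hi => gridCode_sub_mem_Icc (one_div_pos.2 hη).le (hg i hi i₀ hi₀)) hb
  refine ⟨_, Finset.filter_subset _ _, hfib, fun i hi j hj => ?_⟩
  have hij := (Finset.mem_filter.1 hi).2.trans (Finset.mem_filter.1 hj).2.symm
  simpa using norm_sub_le_of_gridCode_eq (one_div_pos.2 hη) (sub_left_injective hij)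

end Grid

section ConeGeometry

lemma exists_clm_norm_apply_eq_infDist {E : Type*} [NormedAddCommGroup E] [InnerProductSpace ℝ E]
    [FiniteDimensional ℝ E] {m : ℕ} {V : Submodule ℝ E} (hV : Module.finrank ℝ Vᗮ = m) :
    ∃ A : E →L[ℝ] EuclideanSpace ℝ (Fin m), ‖A‖ ≤ 1 ∧ ∀ v, infDist v V = ‖A v‖ := by
  let e := ((stdOrthonormalBasis ℝ Vᗮ).reindex (finCongr hV)).repr
  let A : E →L[ℝ] EuclideanSpace ℝ (Fin m) :=
    e.toContinuousLinearEquiv.toContinuousLinearMap ∘L Vᗮ.orthogonalProjectionOnto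
  have hA (v : E) : ‖A v‖ = ‖v - V.starProjection v‖ := by
    rw [← Submodule.starProjection_orthogonal_val]
    exact e.norm_map _
  refine ⟨A, ContinuousLinearMap.opNorm_le_bound _ zero_le_one fun v => ?_, fun v => ?_⟩
  · rw [one_mul]
    exact (e.norm_map _).trans_le (Vᗮ.norm_orthogonalProjectionOnto_apply_le v)
  · rw [hA, V.starProjection_minimal, infDist_eq_iInf]
    simp only [dist_eq_norm]
    rfl

lemma inner_sub_le_or_inner_sub_le {E : Type*} [NormedAddCommGroup E] [InnerProductSpace ℝ E]
    {x y z θ : E} {β : ℝ} (hθ : ‖θ‖ = 1)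
    (h : ‖‖z - y‖⁻¹ • (z - y) - ‖y - x‖⁻¹ • (y - x)‖ ≤ 2 * β) :
    ⟪z - y, θ⟫ ≤ β * ‖z - y‖ ∨ ⟪x - y, θ⟫ ≤ β * ‖x - y‖ := by
  have hsum : ‖z - y‖⁻¹ * ⟪z - y, θ⟫ + ‖x - y‖⁻¹ * ⟪x - y, θ⟫ ≤ 2 * β :=
    calc ‖z - y‖⁻¹ * ⟪z - y, θ⟫ + ‖x - y‖⁻¹ * ⟪x - y, θ⟫
        = ⟪‖z - y‖⁻¹ • (z - y) - ‖y - x‖⁻¹ • (y - x), θ⟫ := by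
          rw [inner_sub_left (_ • _), real_inner_smul_left, real_inner_smul_left, ← neg_sub x y,
            inner_neg_left, norm_neg]
          ring
      _ ≤ ‖‖z - y‖⁻¹ • (z - y) - ‖y - x‖⁻¹ • (y - x)‖ * ‖θ‖ := real_inner_le_norm _ _
      _ ≤ 2 * β := by rwa [hθ, mul_one]
  have hunit (v : E) (hv : ‖v‖⁻¹ * ⟪v, θ⟫ ≤ β) : ⟪v, θ⟫ ≤ β * ‖v‖ := by
    rcases (norm_nonneg v).eq_or_lt' with h0 | hpos
    · simp [norm_eq_zero.1 h0]
    · rwa [inv_mul_le_iff₀ hpos, mul_comm] at hv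
  rcases le_or_gt (‖z - y‖⁻¹ * ⟪z - y, θ⟫) β with hz | hz
  · exact .inl (hunit _ hz)
  · exact .inr (hunit _ (by linarith))

variable {n m : ℕ} {α δ r : ℝ}

lemma mul_norm_sub_le_norm_sub {E : Type*} [SeminormedAddCommGroup E] {y z w : E}
    (hw : ‖w - z‖ ≤ δ * ‖z - y‖) : (1 - δ) * ‖z - y‖ ≤ ‖w - y‖ := by
  have := norm_sub_le_norm_sub_add_norm_sub z w y
  rw [norm_sub_rev z w] at this
  linarith

lemma closedBall_subset_coneX {V : Submodule ℝ (EuclideanSpace ℝ (Fin n))}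
    {F : Type*} [SeminormedAddCommGroup F] [NormedSpace ℝ F]
    {A A' : EuclideanSpace ℝ (Fin n) →L[ℝ] F} {y z : EuclideanSpace ℝ (Fin n)} {η : ℝ}
    (hA : ‖A‖ ≤ 1) (hAV : ∀ v, infDist v V = ‖A v‖) (hAA' : ‖A - A'‖ ≤ δ)
    (hη : ‖A' (z - y)‖ ≤ η * ‖z - y‖) (hyz : y ≠ z) (hr : r ≤ δ * ‖z - y‖) (hα : 0 ≤ α)
    (hδ : η + 2 * δ < α * (1 - δ)) : closedBall z r ⊆ coneX y V α := by
  intro w hw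
  have hwz : ‖w - z‖ ≤ δ * ‖z - y‖ := (mem_closedBall_iff_norm.1 hw).trans hr
  have hpos : 0 < ‖z - y‖ := norm_pos_iff.2 (sub_ne_zero.2 hyz.symm)
  change infDist (w - y) V < α * ‖w - y‖
  calc infDist (w - y) V = ‖A (w - z) + (A - A') (z - y) + A' (z - y)‖ := by
        rw [hAV, sub_apply, add_assoc, sub_add_cancel, ← map_add,
          sub_add_sub_cancel]
    _ ≤ ‖A (w - z)‖ + ‖(A - A') (z - y)‖ + ‖A' (z - y)‖ := norm_add₃_le
    _ ≤ δ * ‖z - y‖ + δ * ‖z - y‖ + η * ‖z - y‖ := by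
        gcongr
        · exact (A.le_of_opNorm_le hA _).trans (by rwa [one_mul])
        · exact (A - A').le_of_opNorm_le hAA' _
    _ = (η + 2 * δ) * ‖z - y‖ := by ring
    _ < α * (1 - δ) * ‖z - y‖ := by gcongr
    _ ≤ α * ‖w - y‖ := by
        rw [mul_assoc]
        exact mul_le_mul_of_nonneg_left (mul_norm_sub_le_norm_sub hwz) hα

lemma disjoint_closedBall_almostHalfSpace {y z θ : EuclideanSpace ℝ (Fin n)} {β : ℝ}
    (hθ : ‖θ‖ = 1) (hβ : ⟪z - y, θ⟫ ≤ β * ‖z - y‖) (hr : r ≤ δ * ‖z - y‖) (hα : 0 ≤ α)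
    (hδ : β + δ ≤ α * (1 - δ)) : Disjoint (closedBall z r) (almostHalfSpace y θ α) := by
  refine Set.disjoint_left.2 fun w hw => (?_ : ⟪w - y, θ⟫ ≤ α * ‖w - y‖).not_gt
  have hwz : ‖w - z‖ ≤ δ * ‖z - y‖ := (mem_closedBall_iff_norm.1 hw).trans hr
  calc ⟪w - y, θ⟫ = ⟪w - z, θ⟫ + ⟪z - y, θ⟫ := by
        rw [← inner_add_left, sub_add_sub_cancel]
    _ ≤ δ * ‖z - y‖ + β * ‖z - y‖ := by
        refine add_le_add ((real_inner_le_norm _ _).trans ?_) hβ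
        rwa [hθ, mul_one]
    _ = (β + δ) * ‖z - y‖ := by ring
    _ ≤ α * (1 - δ) * ‖z - y‖ := by gcongr
    _ ≤ α * ‖w - y‖ := by
        rw [mul_assoc]
        exact mul_le_mul_of_nonneg_left (mul_norm_sub_le_norm_sub hwz) hα

lemma exists_forall_exists_inner_sub_le (E : Type*) [NormedAddCommGroup E]
    [InnerProductSpace ℝ E] [FiniteDimensional ℝ E] {β : ℝ} (hβ : 0 < β) :
    ∃ k : ℕ, ∀ F : Finset E, k < F.card →
      ∃ y ∈ F, ∀ θ, ‖θ‖ = 1 → ∃ z ∈ F, y ≠ z ∧ ⟪z - y, θ⟫ ≤ β * ‖z - y‖ := by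
  have : ProperSpace E := FiniteDimensional.proper ℝ E
  obtain ⟨T, -, hnet⟩ := exists_finset_forall_dist_lt_of_isCompact
    (isCompact_closedBall (0 : E) 1) hβ
  have hdir (x y : E) : ‖y - x‖⁻¹ • (y - x) ∈ closedBall (0 : E) 1 := by
    rw [mem_closedBall_zero_iff, norm_smul, norm_inv, norm_norm]
    exact inv_mul_le_one
  choose dir hdirT hdist using fun x y => hnet _ (hdir x y)
  refine ⟨2 ^ T.card, fun F hF => ?_⟩
  obtain ⟨x, hx, y, hy, z, hz, hxy, hyz, hcol⟩ :=
    exists_path_of_two_pow_card_lt (fun x _ y _ => hdirT x y) hF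
  have hxyz : ‖‖z - y‖⁻¹ • (z - y) - ‖y - x‖⁻¹ • (y - x)‖ ≤ 2 * β := by
    rw [← dist_eq_norm, two_mul]
    exact (dist_triangle_right _ _ (dir x y)).trans
      (add_le_add (hcol ▸ (hdist y z).le) (hdist x y).le)
  refine ⟨y, hy, fun θ hθ => ?_⟩
  rcases inner_sub_le_or_inner_sub_le hθ hxyz with h | h
  exacts [⟨z, hz, hyz, h⟩, ⟨x, hx, hxy.symm, h⟩]

lemma two_mul_ceil_div_add_pow_le {L : ℝ} (hδ : 0 ≤ δ) (hL : 1 ≤ L) :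
    (2 * (⌈L / δ⌉₊ + 1) + 1 : ℝ) ^ m ≤ (2 / δ + 5) ^ m * L ^ m := by
  have hceil : (⌈L / δ⌉₊ : ℝ) < L / δ + 1 := Nat.ceil_lt_add_one (by positivity)
  rw [← mul_pow]
  gcongr
  linarith [mul_div_right_comm 2 L δ, mul_div_assoc 2 L δ]

lemma exists_subset_opNorm_sub_le_of_card_lt (E : Type*) [NormedAddCommGroup E] [NormedSpace ℝ E]
    [FiniteDimensional ℝ E] (m : ℕ) (hδ : 0 < δ) :
    ∃ K : ℝ, ∀ {L ρ : ℝ}, 1 ≤ L → 0 < ρ →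
      ∀ (F : Finset E) (A : E → E →L[ℝ] EuclideanSpace ℝ (Fin m)),
      (∀ y ∈ F, ‖A y‖ ≤ 1) → (∀ y ∈ F, ∀ z ∈ F, ‖y - z‖ ≤ L * ρ) →
      ∀ b : ℕ, K * L ^ m * b < F.card →
        ∃ B ⊆ F, b < B.card ∧ ∃ A' : E →L[ℝ] EuclideanSpace ℝ (Fin m),
          (∀ y ∈ B, ‖A y - A'‖ ≤ δ) ∧ ∀ y ∈ B, ∀ z ∈ B, ‖A' (y - z)‖ ≤ m * (δ * ρ) := by
  have : ProperSpace (E →L[ℝ] EuclideanSpace ℝ (Fin m)) := FiniteDimensional.proper ℝ _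
  obtain ⟨k, hk⟩ := exists_subset_dist_lt_of_card_lt
    (isCompact_closedBall (0 : E →L[ℝ] EuclideanSpace ℝ (Fin m)) 1) hδ
  refine ⟨k * (2 / δ + 5) ^ m, fun {L ρ} hL hρ F A hA hdiam b hb => ?_⟩
  have hcard : (k * ((2 * (⌈L / δ⌉₊ + 1) + 1) ^ m * b) : ℝ) < F.card := by
    refine lt_of_le_of_lt ?_ hb
    rw [mul_assoc (k : ℝ), mul_assoc (k : ℝ)]
    gcongr
    exact two_mul_ceil_div_add_pow_le hδ.le hL
  obtain ⟨B, hBF, hB, A', hA', hAA'⟩ := hk F A (fun y hy => mem_closedBall_zero_iff.2 (hA y hy)) _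
    (by exact_mod_cast hcard)
  have hscale : L * ρ / (δ * ρ) = L / δ := mul_div_mul_right _ _ hρ.ne'
  obtain ⟨C, hCB, hC, hclose⟩ := exists_subset_norm_sub_le_of_card_lt (g := A') (mul_pos hδ hρ)
    (fun y hy z hz => by
      rw [← map_sub]
      exact (A'.le_of_opNorm_le (mem_closedBall_zero_iff.1 hA') _).trans
        (by rw [one_mul]; exact hdiam y (hBF hy) z (hBF hz)))
    (by rwa [hscale])
  refine ⟨C, hCB.trans hBF, hC, A', fun y hy => ?_, fun y hy z hz => ?_⟩
  · exact (dist_eq_norm (A y) A').symm.trans_le (hAA' y (hCB hy)).le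
  · rw [map_sub]
    exact hclose y hy z hz

theorem exists_closedBall_subset_coneX_diff_almostHalfSpace (n m : ℕ) (hα : 0 < α) :
    ∃ M : ℕ, ∃ δ > 0, ∀ {L ρ : ℝ}, 1 ≤ L → 0 < ρ →
      ∀ (F : Finset (EuclideanSpace ℝ (Fin n)))
        (V : EuclideanSpace ℝ (Fin n) → Submodule ℝ (EuclideanSpace ℝ (Fin n))),
      (∀ y ∈ F, Module.finrank ℝ (V y)ᗮ = m) →
      (∀ y ∈ F, ∀ z ∈ F, y ≠ z → ρ ≤ ‖y - z‖) → (∀ y ∈ F, ∀ z ∈ F, ‖y - z‖ ≤ L * ρ) →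
      M * L ^ m < F.card →
      ∃ y ∈ F, ∀ θ, ‖θ‖ = 1 →
        ∃ z ∈ F, closedBall z (δ * ρ) ⊆ coneX y (V y) α \ almostHalfSpace y θ α := by
  obtain ⟨δ, hδ, hδα⟩ : ∃ δ : ℝ, 0 < δ ∧ (m + 3 + α) * δ ≤ α / 2 :=
    ⟨α / 2 / (m + 3 + α), by positivity, (mul_div_cancel₀ _ (by positivity)).le⟩
  have hmδ : 0 ≤ m * δ := by positivity
  obtain ⟨K, hK⟩ := exists_subset_opNorm_sub_le_of_card_lt (EuclideanSpace ℝ (Fin n)) m hδ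
  obtain ⟨k, hk⟩ := exists_forall_exists_inner_sub_le (EuclideanSpace ℝ (Fin n)) (half_pos hα)
  refine ⟨⌈K * k⌉₊, δ, hδ, fun {L ρ} hL hρ F V hV hsep hdiam hcard => ?_⟩
  have hcard' : K * L ^ m * k < F.card := by
    rw [mul_right_comm]
    exact (mul_le_mul_of_nonneg_right (Nat.le_ceil _) (by positivity)).trans_lt hcard
  choose! A hA hAV using fun y hy => exists_clm_norm_apply_eq_infDist (hV y hy)
  obtain ⟨B, hBF, hB, A', hAA', hA'⟩ := hK hL hρ F A hA hdiam k hcard'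
  obtain ⟨y, hy, hnarrow⟩ := hk B hB
  refine ⟨y, hBF hy, fun θ hθ => ?_⟩
  obtain ⟨z, hz, hyz, hinner⟩ := hnarrow θ hθ
  have hρz : ρ ≤ ‖z - y‖ := hsep z (hBF hz) y (hBF hy) hyz.symm
  have hr : δ * ρ ≤ δ * ‖z - y‖ := mul_le_mul_of_nonneg_left hρz hδ.le
  have hA'z : ‖A' (z - y)‖ ≤ m * δ * ‖z - y‖ :=
    (hA' z hz y hy).trans (by rw [mul_assoc]; gcongr)
  exact ⟨z, hBF hz, Set.subset_sdiff.2
    ⟨closedBall_subset_coneX (hA y (hBF hy)) (hAV y (hBF hy)) (hAA' y hy) hA'z hyz hr hα.le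
        (by linarith),
      disjoint_closedBall_almostHalfSpace hθ hinner hr hα.le (by linarith)⟩⟩

end ConeGeometry

section HeavyCubes

variable {n m : ℕ} {α : ℝ}

/-- At the point `x` and the scale `r` the measure `μ` violates the conical lower density estimate
with constant `c`: some `V ∈ G(n, n - m)`, encoded by its codimension `m`, and some unit vector `θ`
satisfy `μ (X(x, r, V, α) \ H(x, θ, α)) ≤ c μ (B(x, r))`. -/
def IsConicallyThin (μ : Measure (EuclideanSpace ℝ (Fin n))) (m : ℕ) (α : ℝ) (c : ℝ≥0∞)
    (x : EuclideanSpace ℝ (Fin n)) (r : ℝ) : Prop :=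
  ∃ (θ : EuclideanSpace ℝ (Fin n)) (V : Submodule ℝ (EuclideanSpace ℝ (Fin n))), ‖θ‖ = 1 ∧
    Module.finrank ℝ Vᗮ = m ∧
      μ ((closedBall x r ∩ coneX x V α) \ almostHalfSpace x θ α) ≤ c * μ (closedBall x r)

/-- The cube of side `1 / (Λ * N²)` around `z`, two generations below the cubes of side `1 / Λ`,
carries more than the proportion `c` of the mass near `z` at scale `1 / Λ`. The radius `2 * n / Λ`
makes the ball contain every ball of radius `n / Λ` centred in the same cube of side `1 / Λ`. -/
def IsHeavy (ν : Measure (EuclideanSpace ℝ (Fin n))) (c : ℝ≥0∞) (N : ℕ) (Λ : ℝ)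
    (z : EuclideanSpace ℝ (Fin n)) : Prop :=
  c * ν (closedBall z (2 * n / Λ)) < ν (gridCode (Λ * N * N) ⁻¹' {gridCode (Λ * N * N) z})

/-- The indices of the cubes of side `1 / (Λ * N)` that contain a heavy point of `D`. -/
def heavyCodes (ν : Measure (EuclideanSpace ℝ (Fin n))) (D : Set (EuclideanSpace ℝ (Fin n)))
    (c : ℝ≥0∞) (N : ℕ) (Λ : ℝ) : Set (Fin n → ℤ) :=
  gridCode (Λ * N) '' {z ∈ D | IsHeavy ν c N Λ z}

lemma tsum_measure_preimage_gridCode (ν : Measure (EuclideanSpace ℝ (Fin n))) (L : ℝ) :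
    ∑' q, ν (gridCode L ⁻¹' {q}) = ν univ := by
  simpa [tsum_univ fun q => ν (gridCode L ⁻¹' {q})] using
    tsum_measure_preimage_singleton (μ := ν) (countable_univ (α := Fin n → ℤ))
      fun q _ => measurable_gridCode L (measurableSet_singleton q)

lemma measure_closedBall_le_sum_gridCode (ν : Measure (EuclideanSpace ℝ (Fin n))) {L : ℝ}
    (hL : 0 ≤ L) (r : ℝ) (z : EuclideanSpace ℝ (Fin n)) :
    ν (closedBall z r) ≤ ∑ k ∈ Finset.Icc (-((⌈L * r⌉₊ + 1 : ℕ) : Fin n → ℤ)) (⌈L * r⌉₊ + 1 : ℕ),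
      ν (gridCode L ⁻¹' {k + gridCode L z}) := by
  refine (measure_mono fun x hx => ?_).trans (measure_biUnion_finset_le _ _)
  exact mem_iUnion₂.2 ⟨_, gridCode_sub_mem_Icc hL (mem_closedBall_iff_norm.1 hx),
    (sub_add_cancel _ _).symm⟩

lemma measure_setOf_measure_gridCode_le (ν : Measure (EuclideanSpace ℝ (Fin n))) {L : ℝ}
    (hL : 0 ≤ L) (r : ℝ) (c : ℝ≥0∞) :
    ν {z | ν (gridCode L ⁻¹' {gridCode L z}) ≤ c * ν (closedBall z r)} ≤
      c * ((2 * (⌈L * r⌉₊ + 1) + 1) ^ n * ν univ) := by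
  let box := Finset.Icc (-((⌈L * r⌉₊ + 1 : ℕ) : Fin n → ℤ)) (⌈L * r⌉₊ + 1 : ℕ)
  let light : Set (Fin n → ℤ) :=
    {p | ν (gridCode L ⁻¹' {p}) ≤ c * ∑ k ∈ box, ν (gridCode L ⁻¹' {k + p})}
  calc ν {z | ν (gridCode L ⁻¹' {gridCode L z}) ≤ c * ν (closedBall z r)}
      ≤ ν (gridCode L ⁻¹' light) := measure_mono fun z hz =>
        le_trans hz (mul_le_mul_right (measure_closedBall_le_sum_gridCode ν hL r z) c)
    _ = ∑' p : light, ν (gridCode L ⁻¹' {(p : Fin n → ℤ)}) :=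
        (tsum_measure_preimage_singleton light.to_countable fun p _ =>
          measurable_gridCode L (measurableSet_singleton p)).symm
    _ ≤ ∑' p : light, c * ∑ k ∈ box, ν (gridCode L ⁻¹' {k + (p : Fin n → ℤ)}) :=
        ENNReal.tsum_le_tsum fun p => p.2
    _ ≤ ∑' p, c * ∑ k ∈ box, ν (gridCode L ⁻¹' {k + p}) :=
        ENNReal.tsum_comp_le_tsum_of_injective Subtype.val_injective _
    _ = c * ∑ k ∈ box, ∑' p, ν (gridCode L ⁻¹' {k + p}) := by
        rw [ENNReal.tsum_mul_left, Summable.tsum_finsetSum fun _ _ => ENNReal.summable]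
    _ = c * ((2 * (⌈L * r⌉₊ + 1) + 1) ^ n * ν univ) := by
        have htranslate (k : Fin n → ℤ) : ∑' p, ν (gridCode L ⁻¹' {k + p}) = ν univ :=
          ((Equiv.addLeft k).tsum_eq fun q => ν (gridCode L ⁻¹' {q})).trans
            (tsum_measure_preimage_gridCode ν L)
        simp only [htranslate, Finset.sum_const, box, card_Icc_neg_natCast, nsmul_eq_mul]
        push_cast
        rfl

lemma measure_setOf_not_isHeavy_le (ν : Measure (EuclideanSpace ℝ (Fin n))) (c : ℝ≥0∞) (N : ℕ)
    {Λ : ℝ} (hΛ : 0 < Λ) :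
    ν {z | ¬IsHeavy ν c N Λ z} ≤ c * ((4 * n * N ^ 2 + 3) ^ n * ν univ) := by
  have hceil : ⌈Λ * N * N * (2 * n / Λ)⌉₊ = 2 * n * N ^ 2 := by
    rw [show Λ * N * N * (2 * n / Λ) = (2 * n * N ^ 2 : ℕ) by push_cast; field_simp,
      Nat.ceil_natCast]
  have := measure_setOf_measure_gridCode_le ν (L := Λ * N * N) (by positivity) (2 * n / Λ) c
  simp only [IsHeavy, not_lt]
  rw [hceil] at this
  convert this using 4
  push_cast
  ring

lemma not_isHeavy_of_closedBall_subset {ν : Measure (EuclideanSpace ℝ (Fin n))}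
    {c : ℝ≥0∞} {N : ℕ} {Λ δ : ℝ} {x z : EuclideanSpace ℝ (Fin n)}
    {S : Set (EuclideanSpace ℝ (Fin n))} (hN : 0 < N) (hΛ : 0 < Λ) (hδ : n ≤ δ * N)
    (hxz : gridCode Λ x = gridCode Λ z) (hS : closedBall z (δ * (1 / (Λ * N))) ⊆ S)
    (hc : ν (closedBall x (n / Λ) ∩ S) ≤ c * ν (closedBall x (n / Λ))) : ¬IsHeavy ν c N Λ z := by
  refine not_lt.2 ?_
  calc ν (gridCode (Λ * N * N) ⁻¹' {gridCode (Λ * N * N) z})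
      ≤ ν (closedBall x (n / Λ) ∩ S) := measure_mono fun w hw => ⟨?_, hS ?_⟩
    _ ≤ c * ν (closedBall x (n / Λ)) := hc
    _ ≤ c * ν (closedBall z (2 * n / Λ)) := by
        refine mul_le_mul_right (measure_mono (closedBall_subset_closedBall' ?_)) c
        rw [dist_eq_norm, mul_div_assoc, two_mul]
        exact add_le_add_right (norm_sub_le_of_gridCode_eq hΛ hxz) _
  · have hw' : gridCode Λ w = gridCode Λ z := by
      rw [← gridCode_mul_natCast_div hN Λ w, ← gridCode_mul_natCast_div hN Λ z,
        ← gridCode_mul_natCast_div hN _ w, ← gridCode_mul_natCast_div hN _ z,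
        show gridCode (Λ * N * N) w = gridCode (Λ * N * N) z from hw]
    exact mem_closedBall_iff_norm.2 (norm_sub_le_of_gridCode_eq hΛ (hw'.trans hxz.symm))
  · refine mem_closedBall_iff_norm.2 ((norm_sub_le_of_gridCode_eq (by positivity) hw).trans ?_)
    rw [mul_one_div, div_le_div_iff₀ (by positivity) (by positivity)]
    nlinarith [mul_le_mul_of_nonneg_right hδ (by positivity : 0 ≤ Λ * N)]

lemma exists_card_le_of_isHeavy (n m : ℕ) (hα : 0 < α) :
    ∃ M N₀ : ℕ, ∀ N ≥ N₀, ∀ (ν : Measure (EuclideanSpace ℝ (Fin n))) (c : ℝ≥0∞) {Λ : ℝ}, 0 < Λ →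
      ∀ F : Finset (EuclideanSpace ℝ (Fin n)),
      (∀ x ∈ F, IsConicallyThin ν m α c x (n / Λ)) → (∀ x ∈ F, IsHeavy ν c N Λ x) →
      (∀ x ∈ F, ∀ y ∈ F, gridCode Λ x = gridCode Λ y) →
      (∀ x ∈ F, ∀ y ∈ F, x ≠ y → 1 / (Λ * N) ≤ ‖x - y‖) → F.card ≤ M * N ^ m := by
  obtain ⟨M, δ, hδ, hgeom⟩ := exists_closedBall_subset_coneX_diff_almostHalfSpace n m hα
  refine ⟨M * (n + 1) ^ m, ⌈n / δ⌉₊ + 1, fun N hN ν c Λ hΛ F hthin hheavy hcode hsep => ?_⟩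
  have hN0 : 0 < N := by lia
  have hN1 : (1 : ℝ) ≤ N := by exact_mod_cast hN0
  have hδN : n ≤ δ * N := by
    rw [← div_le_iff₀' hδ]
    exact (Nat.le_ceil _).trans (by exact_mod_cast (Nat.le_succ _).trans hN)
  have hdiam : ∀ x ∈ F, ∀ y ∈ F, ‖x - y‖ ≤ (n + 1) * N * (1 / (Λ * N)) := fun x hx y hy =>
    calc ‖x - y‖ ≤ n / Λ := norm_sub_le_of_gridCode_eq hΛ (hcode x hx y hy)
      _ ≤ (n + 1) / Λ := by gcongr; linarith
      _ = (n + 1) * N * (1 / (Λ * N)) := by field_simp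
  choose! θ V hθ hV hle using hthin
  by_contra! hcard
  obtain ⟨x, hx, hcone⟩ := hgeom (L := (n + 1) * N) (ρ := 1 / (Λ * N)) (by nlinarith)
    (by positivity) F V hV hsep hdiam (by rw [mul_pow, ← mul_assoc]; exact_mod_cast hcard)
  obtain ⟨z, hz, hzsub⟩ := hcone (θ x) (hθ x hx)
  refine not_isHeavy_of_closedBall_subset hN0 hΛ hδN (hcode x hx z hz) hzsub ?_
    (hheavy z hz)
  rw [← inter_sdiff_assoc]
  exact hle x hx

theorem exists_ncard_heavyCodes_le (n m : ℕ) (hα : 0 < α) :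
    ∃ M N₀ : ℕ, ∀ N ≥ N₀, ∀ (ν : Measure (EuclideanSpace ℝ (Fin n)))
      (D : Set (EuclideanSpace ℝ (Fin n))) (c : ℝ≥0∞) {Λ : ℝ}, 0 < Λ →
      (∀ x ∈ D, IsConicallyThin ν m α c x (n / Λ)) → ∀ q : Fin n → ℤ,
        ((gridChildren N q : Set (Fin n → ℤ)) ∩ heavyCodes ν D c N Λ).ncard ≤ M * N ^ m := by
  classical
  obtain ⟨M, N₀, hM⟩ := exists_card_le_of_isHeavy n m hα
  refine ⟨2 ^ n * M, N₀ + 1, fun N hN ν D c Λ hΛ hthin q => ?_⟩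
  have hN0 : (0 : ℝ) < N := by exact_mod_cast (by lia : 0 < N)
  set G := (gridChildren N q).filter (· ∈ heavyCodes ν D c N Λ) with hG
  have hcoe : (gridChildren N q : Set (Fin n → ℤ)) ∩ heavyCodes ν D c N Λ = G := by
    rw [hG, Finset.coe_filter]
    rfl
  rw [hcoe, Set.ncard_coe_finset]
  by_contra! hcard
  obtain ⟨B, hBG, hB, hsparse⟩ := exists_sparse_subset G (b := M * N ^ m)
    (by rwa [Fintype.card_fin, ← mul_assoc])
  choose! z hz hzp using fun p (hp : p ∈ B) => (Finset.mem_filter.1 (hBG hp)).2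
  have hzq : ∀ p ∈ B, gridCode Λ (z p) = q := fun p hp => by
    rw [← gridCode_mul_natCast_div (by lia : 0 < N), hzp p hp,
      (mem_gridChildren (by lia)).1 (Finset.mem_filter.1 (hBG hp)).1]
  have hinj : Set.InjOn z B := fun p hp p' hp' h => by rw [← hzp p hp, h, hzp p' hp']
  refine hB.not_ge ?_
  rw [← Finset.card_image_of_injOn hinj]
  refine hM N (by lia) ν c hΛ (B.image z) ?_ ?_ ?_ ?_ <;> simp only [Finset.forall_mem_image]
  · exact fun p hp => hthin _ (hz p hp).1
  · exact fun p hp => (hz p hp).2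
  · exact fun p hp p' hp' => (hzq p hp).trans (hzq p' hp').symm
  · intro p hp p' hp' hne
    obtain ⟨i, hi⟩ := hsparse p hp p' hp' (ne_of_apply_ne z hne)
    refine one_div_le_norm_sub_of_two_le_abs_gridCode_sub (mul_pos hΛ hN0) (i := i) ?_
    rwa [hzp p hp, hzp p' hp']

end HeavyCubes

section BorelCantelli

variable {X : Type*}

lemma hausdorffMeasure_limsup_iUnion_eq_zero [EMetricSpace X] [MeasurableSpace X] [BorelSpace X]
    {ι : Type*} [Countable ι] {d : ℝ} (hd : 0 < d) (t : ℕ → ι → Set X)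
    (ht : ∑' j, ∑' i, ediam (t j i) ^ d ≠ ∞) :
    μH[d] (limsup (fun j => ⋃ i, t j i) atTop) = 0 := by
  have htail := ENNReal.tendsto_sum_nat_add _ ht
  refine le_antisymm ?_ zero_le
  calc μH[d] (limsup (fun j => ⋃ i, t j i) atTop)
      ≤ liminf (fun K => ∑' p : ℕ × ι, ediam (t (p.1 + K) p.2) ^ d) atTop := by
        refine Measure.hausdorffMeasure_le_liminf_tsum d _
          (fun K => (∑' j, ∑' i, ediam (t (j + K) i) ^ d) ^ d⁻¹) ?_
          (fun K (p : ℕ × ι) => t (p.1 + K) p.2) (.of_forall fun K p => ?_)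
          (.of_forall fun K x hx => ?_)
        · simpa [ENNReal.zero_rpow_of_pos (inv_pos.2 hd)] using
            htail.ennrpow_const d⁻¹
        · rw [ENNReal.le_rpow_inv_iff hd]
          exact (ENNReal.le_tsum p.2).trans
            (ENNReal.le_tsum (f := fun j => ∑' i, ediam (t (j + K) i) ^ d) p.1)
        · obtain ⟨j, hj, hxj⟩ := (mem_limsup_iff_frequently_mem.1 hx).forall_exists_of_atTop K
          obtain ⟨i, hi⟩ := mem_iUnion.1 hxj
          exact mem_iUnion.2 ⟨(j - K, i), by rwa [Nat.sub_add_cancel hj]⟩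
    _ = 0 := by
        have hprod K := ENNReal.tsum_prod (f := fun j i => ediam (t (j + K) i) ^ d)
        simpa only [hprod] using htail.liminf_eq

variable [MeasurableSpace X] (ρ : Measure X)

lemma le_measure_limsup_atTop [IsFiniteMeasure ρ] {T : ℕ → Set X} (hT : ∀ j, MeasurableSet (T j))
    {a : ℝ≥0∞} (ha : ∃ᶠ j in atTop, a ≤ ρ (T j)) : a ≤ ρ (limsup T atTop) := by
  rw [limsup_eq_iInf_iSup_of_nat]
  refine ge_of_tendsto' (tendsto_measure_iInter_atTop (fun K => ?_) (fun K K' hKK' => ?_)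
    ⟨0, measure_ne_top _ _⟩) fun K => ?_
  · exact (MeasurableSet.iUnion fun j => .iUnion fun _ => hT j).nullMeasurableSet
  · exact biSup_mono fun j hj => hKK'.trans hj
  · obtain ⟨j, hj, hja⟩ := ha.forall_exists_of_atTop K
    exact hja.trans (measure_mono (subset_biUnion_of_mem (u := T) hj))

open Classical in
lemma mul_measure_le_card_filter_le {ι : Type*} {s : Finset ι} {B : ι → Set X}
    (hB : ∀ i ∈ s, MeasurableSet (B i)) (a : ℝ≥0∞) :
    a * ρ {x | a ≤ (s.filter fun i => x ∈ B i).card} ≤ ∑ i ∈ s, ρ (B i) := by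
  have hcard (x : X) : ((s.filter fun i => x ∈ B i).card : ℝ≥0∞) =
      ∑ i ∈ s, (B i).indicator (fun _ => 1) x := by
    simp only [Finset.natCast_card_filter, indicator_apply]
  have hmeas : ∀ i ∈ s, Measurable ((B i).indicator fun _ => (1 : ℝ≥0∞)) :=
    fun i hi => measurable_const.indicator (hB i hi)
  simp only [hcard]
  calc a * ρ {x | a ≤ ∑ i ∈ s, (B i).indicator (fun _ => 1) x}
      ≤ ∫⁻ x, ∑ i ∈ s, (B i).indicator (fun _ => 1) x ∂ρ :=
        mul_meas_ge_le_lintegral (Finset.measurable_fun_sum s hmeas) a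
    _ = ∑ i ∈ s, ρ (B i) := by
        rw [lintegral_finsetSum s hmeas]
        exact Finset.sum_congr rfl fun i hi => lintegral_indicator_one (hB i hi)

end BorelCantelli

section CubeWeight

variable {n N P : ℕ}

open Classical in
/-- The weights that start from mass `1` on every cube with index in `S` and pass from a cube to
each of its `N ^ n` children the full mass of the parent if the child is selected, i.e. its index
lies in the set `G j` of its generation, and the average mass otherwise. -/
noncomputable def cubeWeight (N : ℕ) (S : Finset (Fin n → ℤ)) (G : ℕ → Set (Fin n → ℤ)) :
    ℕ → (Fin n → ℤ) → ℝ≥0∞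
  | 0, p => if p ∈ S then 1 else 0
  | j + 1, p => cubeWeight N S G j (p / N) * if p ∈ G j then 1 else ((N : ℝ≥0∞) ^ n)⁻¹

variable (S : Finset (Fin n → ℤ)) (G : ℕ → Set (Fin n → ℤ))

lemma tsum_eq_tsum_sum_gridChildren (hN : 0 < N) (f : (Fin n → ℤ) → ℝ≥0∞) :
    ∑' p, f p = ∑' q, ∑ p ∈ gridChildren N q, f p := by
  rw [← ENNReal.tsum_fiberwise f fun p => p / (N : Fin n → ℤ)]
  refine tsum_congr fun q => ?_
  rw [← Finset.tsum_subtype', show (gridChildren N q : Set (Fin n → ℤ)) = _ from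
    Set.ext fun p => mem_gridChildren hN]
  rfl

variable {G}

open Classical in
lemma sum_gridChildren_ite_le (hN : 0 < N) {A : Set (Fin n → ℤ)} {q : Fin n → ℤ}
    (hA : ((gridChildren N q : Set (Fin n → ℤ)) ∩ A).ncard ≤ P) :
    ∑ p ∈ gridChildren N q, (if p ∈ A then 1 else ((N : ℝ≥0∞) ^ n)⁻¹) ≤ P + 1 := by
  have hN0 : (N : ℝ≥0∞) ^ n ≠ 0 := by positivity
  rw [Finset.sum_ite, Finset.sum_const, Finset.sum_const, nsmul_one, nsmul_eq_mul]
  refine add_le_add ?_ ?_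
  · rw [← Set.ncard_coe_finset, Finset.coe_filter]
    exact_mod_cast hA
  · calc ((gridChildren N q).filter (· ∉ A)).card * ((N : ℝ≥0∞) ^ n)⁻¹
        ≤ (N : ℝ≥0∞) ^ n * ((N : ℝ≥0∞) ^ n)⁻¹ := by
          gcongr
          exact_mod_cast (Finset.card_filter_le _ _).trans_eq (card_gridChildren N q)
      _ = 1 := ENNReal.mul_inv_cancel hN0 (by finiteness)

lemma tsum_cubeWeight_le (hN : 0 < N)
    (hG : ∀ j (q : Fin n → ℤ), ((gridChildren N q : Set (Fin n → ℤ)) ∩ G j).ncard ≤ P) (j : ℕ) :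
    ∑' p, cubeWeight N S G j p ≤ S.card * (P + 1) ^ j := by
  classical
  induction j with
  | zero =>
    simp only [cubeWeight, pow_zero, mul_one]
    rw [tsum_eq_sum (s := S) fun p hp => if_neg hp,
      Finset.sum_congr rfl fun p hp => if_pos hp, Finset.sum_const, nsmul_one]
  | succ j ih =>
    calc ∑' p, cubeWeight N S G (j + 1) p
        = ∑' q, cubeWeight N S G j q *
            ∑ p ∈ gridChildren N q, (if p ∈ G j then 1 else ((N : ℝ≥0∞) ^ n)⁻¹) := by
          rw [tsum_eq_tsum_sum_gridChildren hN]
          refine tsum_congr fun q => ?_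
          rw [Finset.mul_sum]
          refine Finset.sum_congr rfl fun p hp => ?_
          rw [cubeWeight, (mem_gridChildren hN).1 hp]
      _ ≤ ∑' q, cubeWeight N S G j q * (P + 1) := by
          gcongr with q
          exact sum_gridChildren_ite_le hN (hG j q)
      _ ≤ S.card * (P + 1) ^ (j + 1) := by
          rw [ENNReal.tsum_mul_right, pow_succ, ← mul_assoc]
          gcongr

variable (G)

open Classical in
lemma cubeWeight_gridCode (hN : 0 < N) {L : ℝ} {x : EuclideanSpace ℝ (Fin n)}
    (hx : gridCode L x ∈ S) (j : ℕ) :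
    cubeWeight N S G j (gridCode (L * N ^ j) x) =
      ((N : ℝ≥0∞) ^ n)⁻¹ ^ ((Finset.range j).filter
        fun i => gridCode (L * N ^ (i + 1)) x ∉ G i).card := by
  induction j with
  | zero => simp [cubeWeight, hx]
  | succ j ih =>
    rw [cubeWeight, pow_succ (N : ℝ), ← mul_assoc, gridCode_mul_natCast_div hN, ih,
      Finset.range_add_one, Finset.filter_insert, mul_assoc, ← pow_succ]
    split_ifs <;> simp [pow_succ]

end CubeWeight

section DimensionDrop

variable {n N P : ℕ}

lemma ediam_preimage_gridCode_rpow_le {L : ℝ} (hL : 0 < L) (hN : 0 < N) {t : ℝ} (ht : 0 ≤ t)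
    (j : ℕ) (q : Fin n → ℤ) :
    ediam (gridCode (L * N ^ j) ⁻¹' {q}) ^ t ≤
      ENNReal.ofReal (n / L) ^ t * (((N : ℝ≥0∞) ^ t)⁻¹) ^ j := by
  have hNr : (0 : ℝ) < N := by exact_mod_cast hN
  have hdiam : ediam (gridCode (L * N ^ j) ⁻¹' {q}) ≤
      ENNReal.ofReal (n / L) * ((N : ℝ≥0∞)⁻¹) ^ j := by
    refine ediam_le fun x hx y hy => ?_
    rw [edist_dist, dist_eq_norm, ← ENNReal.ofReal_natCast N, ← ENNReal.ofReal_inv_of_pos hNr,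
      ← ENNReal.ofReal_pow (by positivity), ← ENNReal.ofReal_mul (by positivity), inv_pow,
      ← div_eq_mul_inv, div_div]
    exact ENNReal.ofReal_le_ofReal
      (norm_sub_le_of_gridCode_eq (by positivity) (Eq.trans hx hy.symm))
  calc ediam (gridCode (L * N ^ j) ⁻¹' {q}) ^ t
      ≤ (ENNReal.ofReal (n / L) * ((N : ℝ≥0∞)⁻¹) ^ j) ^ t := ENNReal.rpow_le_rpow hdiam ht
    _ = ENNReal.ofReal (n / L) ^ t * (((N : ℝ≥0∞) ^ t)⁻¹) ^ j := by
        rw [ENNReal.mul_rpow_of_nonneg _ _ ht, ← ENNReal.inv_rpow, ← ENNReal.rpow_natCast,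
          ← ENNReal.rpow_natCast, ← ENNReal.rpow_mul, ← ENNReal.rpow_mul, mul_comm (j : ℝ)]

lemma dimH_limsup_setOf_one_le_gridCode_le {L : ℝ} (hL : 0 < L) (hN : 0 < N) {t : NNReal}
    (ht : 0 < t) {w : ℕ → (Fin n → ℤ) → ℝ≥0∞} {C a κ : ℝ≥0∞} (hC : C ≠ ∞)
    (hw : ∀ j, ∑' q, w j q ≤ C * a ^ j) (hlt : a * κ < (N : ℝ≥0∞) ^ (t : ℝ)) :
    dimH (limsup (fun j => {x | 1 ≤ κ ^ j * w j (gridCode (L * N ^ j) x)}) atTop) ≤ t := by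
  classical
  let A := ENNReal.ofReal (n / L) ^ (t : ℝ)
  let b := ((N : ℝ≥0∞) ^ (t : ℝ))⁻¹
  let T j (q : Fin n → ℤ) : Set (EuclideanSpace ℝ (Fin n)) :=
    if 1 ≤ κ ^ j * w j q then gridCode (L * N ^ j) ⁻¹' {q} else ∅
  have hcover j : {x | 1 ≤ κ ^ j * w j (gridCode (L * N ^ j) x)} = ⋃ q, T j q := by
    ext x
    simp [T, mem_ite_empty_right]
  have hT j q : ediam (T j q) ^ (t : ℝ) ≤ A * b ^ j * (κ ^ j * w j q) := by
    simp only [T]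
    split_ifs with hq
    · exact (ediam_preimage_gridCode_rpow_le hL hN t.2 j q).trans (le_mul_of_one_le_right' hq)
    · simp [ht]
  have hlevel j : ∑' q, ediam (T j q) ^ (t : ℝ) ≤ A * C * (b * κ * a) ^ j :=
    calc ∑' q, ediam (T j q) ^ (t : ℝ) ≤ ∑' q, A * b ^ j * (κ ^ j * w j q) :=
          ENNReal.tsum_le_tsum (hT j)
      _ ≤ A * b ^ j * (κ ^ j * (C * a ^ j)) := by
          rw [ENNReal.tsum_mul_left, ENNReal.tsum_mul_left]
          gcongr
          exact hw j
      _ = A * C * (b * κ * a) ^ j := by ring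
  have hratio : b * κ * a < 1 := by
    rw [mul_assoc, mul_comm b, mul_comm κ, ← div_eq_mul_inv]
    exact ENNReal.div_lt_of_lt_mul (by rwa [one_mul])
  refine dimH_le_of_hausdorffMeasure_ne_top ?_
  simp only [hcover]
  rw [hausdorffMeasure_limsup_iUnion_eq_zero (by exact_mod_cast ht) T]
  · exact ENNReal.zero_ne_top
  · refine ne_top_of_le_ne_top ?_ (ENNReal.tsum_le_tsum hlevel)
    rw [ENNReal.tsum_mul_left, ENNReal.tsum_geometric]
    exact ENNReal.mul_ne_top (ENNReal.mul_ne_top (by finiteness) hC)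
      (ENNReal.inv_ne_top.2 (tsub_pos_of_lt hratio).ne')

open Classical in
lemma measure_mul_le_card_filter_le_half {X : Type*} [MeasurableSpace X] {ρ : Measure X}
    {B : ℕ → Set X} (hB : ∀ i, MeasurableSet (B i)) {β : ℝ} (hβ : 0 < β)
    (hρB : ∀ i, ρ (B i) ≤ ENNReal.ofReal (β / 2) * ρ univ) {j : ℕ} (hj : 0 < j) :
    ρ {x | ENNReal.ofReal (β * j) ≤ ((Finset.range j).filter fun i => x ∈ B i).card} ≤
      ρ univ / 2 := by
  have hβj : 0 < ENNReal.ofReal (β * j) := by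
    rw [ENNReal.ofReal_pos]
    positivity
  rw [← ENNReal.mul_le_mul_iff_right hβj.ne' ENNReal.ofReal_ne_top]
  calc ENNReal.ofReal (β * j) *
        ρ {x | ENNReal.ofReal (β * j) ≤ ((Finset.range j).filter fun i => x ∈ B i).card}
      ≤ ∑ i ∈ Finset.range j, ρ (B i) := mul_measure_le_card_filter_le ρ (fun i _ => hB i) _
    _ ≤ ∑ _i ∈ Finset.range j, ENNReal.ofReal (β / 2) * ρ univ := by gcongr with i; exact hρB i
    _ = ENNReal.ofReal (β * j) * (ρ univ / 2) := by
        rw [Finset.sum_const, Finset.card_range, nsmul_eq_mul, ENNReal.ofReal_mul hβ.le,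
          ENNReal.ofReal_natCast, ENNReal.ofReal_div_of_pos two_pos, ENNReal.ofReal_ofNat,
          div_eq_mul_inv, div_eq_mul_inv]
        ring

open Classical in
lemma one_le_rpow_pow_mul_cubeWeight {L : ℝ} (hN : 0 < N) {S : Finset (Fin n → ℤ)}
    (G : ℕ → Set (Fin n → ℤ)) {x : EuclideanSpace ℝ (Fin n)} (hx : gridCode L x ∈ S) {β : ℝ} {j : ℕ}
    (hcard : ((Finset.range j).filter fun i => gridCode (L * N ^ (i + 1)) x ∉ G i).card ≤ β * j) :
    1 ≤ ((N : ℝ≥0∞) ^ (n * β)) ^ j * cubeWeight N S G j (gridCode (L * N ^ j) x) := by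
  have hN1 : (1 : ℝ≥0∞) ≤ N := by exact_mod_cast hN
  rw [cubeWeight_gridCode S G hN hx, ENNReal.inv_pow, ← pow_mul, ← ENNReal.inv_pow,
    ← div_eq_mul_inv, ENNReal.le_div_iff_mul_le (by simp; lia) (by simp), one_mul,
    ← ENNReal.rpow_natCast, ← ENNReal.rpow_natCast, ← ENNReal.rpow_mul]
  refine ENNReal.rpow_le_rpow_of_exponent_le hN1 ?_
  push_cast
  rw [mul_assoc]
  gcongr

theorem exists_measurableSet_measure_ne_zero_dimH_le {L : ℝ} (hL : 0 < L) (hN : 0 < N)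
    {t : NNReal} (ht : 0 < t) {β : ℝ} (hβ : 0 < β)
    (hlt : (P + 1) * (N : ℝ≥0∞) ^ (n * β) < (N : ℝ≥0∞) ^ (t : ℝ))
    {ρ : Measure (EuclideanSpace ℝ (Fin n))} [IsFiniteMeasure ρ] (hρ : ρ univ ≠ 0)
    {S : Finset (Fin n → ℤ)} (hS : ∀ᵐ x ∂ρ, gridCode L x ∈ S) {G : ℕ → Set (Fin n → ℤ)}
    (hG : ∀ j (q : Fin n → ℤ), ((gridChildren N q : Set (Fin n → ℤ)) ∩ G j).ncard ≤ P)
    (hρG : ∀ j, ρ {x | gridCode (L * N ^ (j + 1)) x ∉ G j} ≤ ENNReal.ofReal (β / 2) * ρ univ) :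
    ∃ D, MeasurableSet D ∧ ρ D ≠ 0 ∧ dimH D ≤ t := by
  classical
  let T j := {x | 1 ≤ ((N : ℝ≥0∞) ^ (n * β)) ^ j * cubeWeight N S G j (gridCode (L * N ^ j) x)}
  have hmeas (Λ : ℝ) (A : Set (Fin n → ℤ)) :
      MeasurableSet (gridCode Λ ⁻¹' A : Set (EuclideanSpace ℝ (Fin n))) :=
    measurable_gridCode Λ A.to_countable.measurableSet
  have hT j : MeasurableSet (T j) :=
    hmeas (L * N ^ j) {q | 1 ≤ ((N : ℝ≥0∞) ^ (n * β)) ^ j * cubeWeight N S G j q}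
  have hcompl j (hj : 0 < j) : ρ (T j)ᶜ ≤ ρ univ / 2 := by
    refine (measure_mono_ae ?_).trans
      (measure_mul_le_card_filter_le_half (fun i => hmeas (L * N ^ (i + 1)) (G i)ᶜ) hβ hρG hj)
    filter_upwards [hS] with x hxS hxT
    refine le_of_not_ge fun hcard => hxT (one_le_rpow_pow_mul_cubeWeight hN G hxS ?_)
    rw [← ENNReal.ofReal_natCast] at hcard
    convert (ENNReal.ofReal_le_ofReal_iff (by positivity)).1 hcard
  have hhalf j (hj : 0 < j) : ρ univ / 2 ≤ ρ (T j) := by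
    rw [← ENNReal.add_le_add_iff_right (measure_ne_top ρ (T j)ᶜ), measure_add_measure_compl (hT j)]
    calc ρ univ / 2 + ρ (T j)ᶜ ≤ ρ univ / 2 + ρ univ / 2 := by gcongr; exact hcompl j hj
      _ = ρ univ := ENNReal.add_halves _
  refine ⟨limsup T atTop, .measurableSet_limsup hT, fun hzero => hρ ?_,
    dimH_limsup_setOf_one_le_gridCode_le hL hN ht (ENNReal.natCast_ne_top _)
      (tsum_cubeWeight_le S hN hG) hlt⟩
  have := le_measure_limsup_atTop ρ hT ((eventually_gt_atTop 0).mono hhalf).frequently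
  rw [hzero, nonpos_iff_eq_zero, ENNReal.div_eq_zero_iff] at this
  exact this.resolve_right ENNReal.ofNat_ne_top

end DimensionDrop

section ConicalDensity

variable {n m : ℕ} {s α : ℝ}

lemma restrict_setOf_notMem_heavyCodes_le (ν : Measure (EuclideanSpace ℝ (Fin n)))
    (D : Set (EuclideanSpace ℝ (Fin n))) (c : ℝ≥0∞) (N : ℕ) {Λ : ℝ} (hΛ : 0 < Λ) :
    ν.restrict D {x | gridCode (Λ * N) x ∉ heavyCodes ν D c N Λ} ≤
      c * ((4 * n * N ^ 2 + 3) ^ n * ν univ) := by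
  refine le_trans ?_ (measure_setOf_not_isHeavy_le ν c N hΛ)
  have hmeas : MeasurableSet
      {x : EuclideanSpace ℝ (Fin n) | gridCode (Λ * N) x ∉ heavyCodes ν D c N Λ} :=
    measurable_gridCode _ (heavyCodes ν D c N Λ)ᶜ.to_countable.measurableSet
  rw [Measure.restrict_apply hmeas]
  exact measure_mono fun x hx hheavy => hx.1 (mem_image_of_mem _ ⟨hx.2, hheavy⟩)

lemma ofReal_div_natCast_mul_le {β : ℝ} (hβ : 0 ≤ β) {K : ℕ} (hK : 0 < K) {a b : ℝ≥0∞}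
    (hab : a ≤ 2 * b) : ENNReal.ofReal (β / 4 / K) * (K * a) ≤ ENNReal.ofReal (β / 2) * b :=
  calc ENNReal.ofReal (β / 4 / K) * (K * a)
      ≤ ENNReal.ofReal (β / 4 / K) * (K * (2 * b)) := by gcongr
    _ = ENNReal.ofReal (β / 4 / K * (K * 2)) * b := by
        rw [ENNReal.ofReal_mul (by positivity), ENNReal.ofReal_mul (by positivity),
          ENNReal.ofReal_natCast, ENNReal.ofReal_ofNat]
        ring
    _ = ENNReal.ofReal (β / 2) * b := by
        congr 2
        field_simp
        norm_num

lemma exists_nat_mul_rpow_lt_rpow (M N₀ : ℕ) (hn : 0 < n) (hs : m < s) :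
    ∃ N ≥ N₀, 0 < N ∧ ∃ β > (0 : ℝ), ∃ t > (0 : ℝ), t < s ∧
      ((M * N ^ m : ℕ) + 1) * (N : ℝ≥0∞) ^ (n * β) < (N : ℝ≥0∞) ^ t := by
  let σ := s - m
  have hσ : 0 < σ := sub_pos.2 hs
  have htendsto : Tendsto (fun N : ℕ => (N : ℝ) ^ (σ / 4)) atTop atTop :=
    (tendsto_rpow_atTop (by positivity)).comp tendsto_natCast_atTop_atTop
  obtain ⟨N, hMN, hN₀, hN⟩ := ((htendsto.eventually_gt_atTop (M + 1)).and
    ((eventually_ge_atTop N₀).and (eventually_gt_atTop 0))).exists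
  have hN0 : (0 : ℝ) < N := by exact_mod_cast hN
  have hN1 : (1 : ℝ) ≤ N := by exact_mod_cast hN
  refine ⟨N, hN₀, hN, σ / (4 * n), by positivity, m + σ / 2, by positivity, by grind, ?_⟩
  have hreal : ((M * N ^ m : ℕ) + 1) * (N : ℝ) ^ (n * (σ / (4 * n))) < (N : ℝ) ^ (m + σ / 2) :=
    calc ((M * N ^ m : ℕ) + 1) * (N : ℝ) ^ (n * (σ / (4 * n)))
        = (M * N ^ m + 1) * (N : ℝ) ^ (σ / 4) := by
          push_cast
          congr 2
          field_simp
      _ ≤ (M + 1) * N ^ m * (N : ℝ) ^ (σ / 4) := by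
          gcongr
          nlinarith [one_le_pow₀ hN1 (n := m)]
      _ < (N : ℝ) ^ (σ / 4) * N ^ m * (N : ℝ) ^ (σ / 4) := by gcongr
      _ = (N : ℝ) ^ (m + σ / 2) := by
          rw [← Real.rpow_natCast, ← Real.rpow_add hN0, ← Real.rpow_add hN0]
          ring_nf
  have hennreal := (ENNReal.ofReal_lt_ofReal_iff (by positivity)).2 hreal
  rwa [ENNReal.ofReal_mul (by positivity), ← ENNReal.ofReal_rpow_of_pos hN0,
    ← ENNReal.ofReal_rpow_of_pos hN0, ENNReal.ofReal_add (by positivity) zero_le_one,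
    ENNReal.ofReal_natCast, ENNReal.ofReal_natCast, ENNReal.ofReal_one] at hennreal

lemma exists_forall_div_mul_pow_lt (n : ℕ) {N : ℕ} (hN : 0 < N) {r : ℝ} (hr : 0 < r) :
    ∃ L : ℝ, 0 < L ∧ ∀ j : ℕ, n / (L * N ^ j) < r := by
  have hL : 0 < (n + 1) / r := by positivity
  refine ⟨(n + 1) / r, hL, fun j => ?_⟩
  calc n / ((n + 1) / r * N ^ j) ≤ n / ((n + 1) / r) := by
        gcongr
        exact le_mul_of_one_le_right hL.le (one_le_pow₀ (by exact_mod_cast hN))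
    _ < r := by
        rw [div_div_eq_mul_div, div_lt_iff₀ (by positivity)]
        nlinarith

lemma exists_dimH_lt_of_isConicallyThin (hn : 0 < n) (hs : m < s) (hα : 0 < α) :
    ∃ c : ℝ, 0 < c ∧ ∀ (ν : Measure (EuclideanSpace ℝ (Fin n))) [IsFiniteMeasure ν]
      {D : Set (EuclideanSpace ℝ (Fin n))}, Bornology.IsBounded D → ν D ≠ 0 → ν univ ≤ 2 * ν D →
      ∀ {r₁ : ℝ}, 0 < r₁ →
      (∀ x ∈ D, ∀ r, 0 < r → r < r₁ → IsConicallyThin ν m α (ENNReal.ofReal c) x r) →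
      ∃ A, MeasurableSet A ∧ ν A ≠ 0 ∧ dimH A < ENNReal.ofReal s := by
  obtain ⟨M, N₀, hM⟩ := exists_ncard_heavyCodes_le n m hα
  obtain ⟨N, hN, hN0, β, hβ, t, ht, hts, hlt⟩ := exists_nat_mul_rpow_lt_rpow M N₀ hn hs
  lift t to NNReal using ht.le
  refine ⟨β / 4 / ((4 * n * N ^ 2 + 3) ^ n : ℕ), by positivity,
    fun ν _ D hDbdd hD hνD r₁ hr₁ hthin => ?_⟩
  set c := ENNReal.ofReal (β / 4 / ((4 * n * N ^ 2 + 3) ^ n : ℕ))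
  obtain ⟨R, hR⟩ := isBounded_iff_forall_norm_le.1 hDbdd
  obtain ⟨L, hL, hLr⟩ := exists_forall_div_mul_pow_lt n hN0 hr₁
  let S := Finset.Icc (-((⌈L * R⌉₊ + 1 : ℕ) : Fin n → ℤ)) (⌈L * R⌉₊ + 1 : ℕ)
  have hS : ∀ᵐ x ∂ν.restrict D, gridCode L x ∈ S :=
    (ae_restrict_iff (measurable_gridCode L S.measurableSet)).2 <|
      .of_forall fun x hx => gridCode_mem_Icc hL.le (hR x hx)
  have hheavy (j : ℕ) : ν.restrict D
      {x | gridCode (L * N ^ (j + 1)) x ∉ heavyCodes ν D c N (L * N ^ j)} ≤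
        ENNReal.ofReal (β / 2) * ν.restrict D univ := by
    rw [Measure.restrict_apply_univ, pow_succ, ← mul_assoc]
    refine (restrict_setOf_notMem_heavyCodes_le ν D c N (by positivity)).trans ?_
    exact_mod_cast ofReal_div_natCast_mul_le hβ.le (by positivity) hνD
  obtain ⟨A, hA, hνA, hdim⟩ := exists_measurableSet_measure_ne_zero_dimH_le hL hN0
    (NNReal.coe_pos.1 ht) hβ hlt (by rwa [Measure.restrict_apply_univ]) hS
    (fun j => hM N hN ν D c (by positivity) fun x hx => hthin x hx _ (by positivity) (hLr j))
    hheavy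
  exact ⟨A, hA, fun h => hνA (Measure.restrict_le_self.absolutelyContinuous h),
    hdim.trans_lt (ENNReal.lt_ofReal_iff_toReal_lt ENNReal.coe_ne_top |>.2 hts)⟩

lemma exists_isOpen_measure_le_two_mul {X : Type*} [PseudoMetricSpace X] [ProperSpace X]
    [MeasurableSpace X] [BorelSpace X] (μ : Measure X) [IsLocallyFiniteMeasure μ] {A : Set X}
    (hA : μ A ≠ 0) :
    ∃ D ⊆ A, Bornology.IsBounded D ∧ μ D ≠ 0 ∧ ∃ U, μ U < ∞ ∧ μ U ≤ 2 * μ D ∧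
      ∃ r > 0, ∀ x ∈ D, closedBall x r ⊆ U := by
  obtain ⟨x₀, -, hx₀⟩ := exists_mem_forall_mem_nhdsWithin_pos_measure hA
  let A₁ := A ∩ closedBall x₀ 1
  have hA₁ : μ A₁ ≠ 0 :=
    (hx₀ _ (inter_mem_nhdsWithin A (closedBall_mem_nhds x₀ one_pos))).ne'
  have hA₁_top : μ A₁ ≠ ∞ :=
    measure_ne_top_of_subset inter_subset_right (isCompact_closedBall x₀ 1).measure_ne_top
  have hdouble : μ A₁ < 2 * μ A₁ := by
    rw [two_mul]
    exact ENNReal.lt_add_right hA₁_top hA₁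
  obtain ⟨U, hA₁U, hU, hμU⟩ := A₁.exists_isOpen_lt_of_lt _ hdouble
  let D (l : ℕ) := {x ∈ A₁ | closedBall x (1 / (l + 1)) ⊆ U}
  have hDmono : Monotone D := fun k l hkl x hx =>
    ⟨hx.1, (closedBall_subset_closedBall (Nat.one_div_le_one_div hkl)).trans hx.2⟩
  have hDunion : ⋃ l, D l = A₁ := by
    refine Subset.antisymm (iUnion_subset fun l x hx => hx.1) fun x hx => ?_
    obtain ⟨ε, hε, hεU⟩ := nhds_basis_closedBall.mem_iff.1 (hU.mem_nhds (hA₁U hx))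
    obtain ⟨l, hl⟩ := exists_nat_one_div_lt hε
    exact mem_iUnion.2 ⟨l, hx, (closedBall_subset_closedBall hl.le).trans hεU⟩
  have hlim : Tendsto (fun l => 2 * μ (D l)) atTop (nhds (2 * μ A₁)) := by
    rw [← hDunion]
    exact ENNReal.Tendsto.const_mul (tendsto_measure_iUnion_atTop hDmono) (.inr (by simp))
  obtain ⟨l, hl⟩ := (hlim.eventually_const_lt hμU).exists
  refine ⟨D l, fun x hx => hx.1.1, isBounded_closedBall.subset fun x hx => hx.1.2, fun h => ?_,
    U, hμU.trans_le le_top, hl.le, 1 / (l + 1), by positivity, fun x hx => hx.2⟩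
  simp [h] at hl

lemma IsConicallyThin.restrict {μ : Measure (EuclideanSpace ℝ (Fin n))} {c : ℝ≥0∞}
    {x : EuclideanSpace ℝ (Fin n)} {r : ℝ} (h : IsConicallyThin μ m α c x r)
    {U : Set (EuclideanSpace ℝ (Fin n))} (hU : closedBall x r ⊆ U) :
    IsConicallyThin (μ.restrict U) m α c x r := by
  obtain ⟨θ, V, hθ, hV, hle⟩ := h
  refine ⟨θ, V, hθ, hV, ?_⟩
  rwa [Measure.restrict_eq_self μ hU,
    Measure.restrict_eq_self μ ((sdiff_subset.trans inter_subset_left).trans hU)]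

theorem exists_measure_setOf_isConicallyThin_eq_zero (hn : 0 < n) (hs : m < s) (hα : 0 < α) :
    ∃ c : ℝ, 0 < c ∧ ∀ (μ : Measure (EuclideanSpace ℝ (Fin n))) [IsLocallyFiniteMeasure μ],
      ENNReal.ofReal s ≤ measDimH μ → ∀ r₁ > 0,
        μ {x | ∀ r, 0 < r → r < r₁ → IsConicallyThin μ m α (ENNReal.ofReal c) x r} = 0 := by
  obtain ⟨c, hc, hdrop⟩ := exists_dimH_lt_of_isConicallyThin hn hs hα
  refine ⟨c, hc, fun μ _ hμ r₁ hr₁ => ?_⟩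
  by_contra hthin
  obtain ⟨D, hDthin, hDbdd, hD, U, hU, hUD, r₂, hr₂, hDU⟩ :=
    exists_isOpen_measure_le_two_mul μ hthin
  have : IsFiniteMeasure (μ.restrict U) := ⟨by rwa [Measure.restrict_apply_univ]⟩
  have hDU' : D ⊆ U := fun x hx => hDU x hx (mem_closedBall_self hr₂.le)
  obtain ⟨A, hA, hνA, hdim⟩ := hdrop (μ.restrict U) (D := D) hDbdd
    (by rwa [Measure.restrict_eq_self μ hDU'])
    (by rwa [Measure.restrict_apply_univ, Measure.restrict_eq_self μ hDU']) (lt_min hr₁ hr₂)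
    fun x hx r hr hrr => (hDthin hx r hr (hrr.trans_le (min_le_left _ _))).restrict
      ((closedBall_subset_closedBall (hrr.trans_le (min_le_right _ _)).le).trans (hDU x hx))
  have hμA : 0 < μ A :=
    pos_iff_ne_zero.2 fun h => hνA (Measure.restrict_le_self.absolutelyContinuous h)
  exact (hμ.trans (iInf₂_le_of_le A hA (iInf_le _ hμA))).not_gt hdim

lemma isConicallyThin_of_iInf_lt {μ : Measure (EuclideanSpace ℝ (Fin n))} {c : ℝ≥0∞}
    {x : EuclideanSpace ℝ (Fin n)} {r : ℝ} (hm : m ≤ n) (hc : c ≠ ∞)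
    (h : ⨅ (θ : sphere (0 : EuclideanSpace ℝ (Fin n)) 1)
        (V : Submodule ℝ (EuclideanSpace ℝ (Fin n))) (_ : Module.finrank ℝ V = n - m),
        μ ((closedBall x r ∩ coneX x V α) \ almostHalfSpace x θ α) / μ (closedBall x r) < c) :
    IsConicallyThin μ m α c x r := by
  simp only [iInf_lt_iff] at h
  obtain ⟨θ, V, hV, hlt⟩ := h
  refine ⟨θ, V, norm_eq_of_mem_sphere θ, V.finrank_add_finrank_orthogonal' ?_,
    (ENNReal.div_le_iff_le_mul (.inr hc) (.inr (pos_of_gt hlt).ne')).1 hlt.le⟩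
  rw [hV, finrank_euclideanSpace_fin, Nat.sub_add_cancel hm]

end ConicalDensity

theorem stmt10_general (n m : ℕ) (hm : m < n) (s α : ℝ) (hs : (m : ℝ) < s) (hα0 : 0 < α) :
    ∃ c : ℝ, 0 < c ∧
      ∀ (μ : Measure (EuclideanSpace ℝ (Fin n))) [IsLocallyFiniteMeasure μ],
        ENNReal.ofReal s ≤ measDimH μ →
        ∀ᵐ x ∂μ, ENNReal.ofReal c <
          limsup (fun r : ℝ =>
            ⨅ (θ : sphere (0 : EuclideanSpace ℝ (Fin n)) 1)
              (V : Submodule ℝ (EuclideanSpace ℝ (Fin n)))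
              (_ : Module.finrank ℝ V = n - m),
              μ ((closedBall x r ∩ coneX x V α) \ almostHalfSpace x θ α)
                / μ (closedBall x r))
            (nhdsWithin 0 (Set.Ioi 0)) := by
  obtain ⟨c, hc, hnull⟩ :=
    exists_measure_setOf_isConicallyThin_eq_zero (Nat.zero_lt_of_lt hm) hs hα0
  refine ⟨c / 2, half_pos hc, fun μ _ hμ => ?_⟩
  have hthin (j : ℕ) := measure_eq_zero_iff_ae_notMem.1 (hnull μ hμ (1 / (j + 1)) (by positivity))
  filter_upwards [ae_all_iff.2 hthin] with x hx
  by_contra! hlimsup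
  have hcc : ENNReal.ofReal (c / 2) < ENNReal.ofReal c :=
    (ENNReal.ofReal_lt_ofReal_iff hc).2 (half_lt_self hc)
  obtain ⟨ε, hε, hsmall⟩ := mem_nhdsGT_iff_exists_Ioo_subset.1
    (eventually_lt_of_limsup_lt (hlimsup.trans_lt hcc))
  obtain ⟨j, hj⟩ := exists_nat_one_div_lt (mem_Ioi.1 hε)
  exact hx j fun r hr hrj =>
    isConicallyThin_of_iInf_lt hm.le ENNReal.ofReal_ne_top (hsmall ⟨hr, hrj.trans hj⟩)

theorem stmt10 (n m : ℕ) (hm : m < n) (s α : ℝ) (hs : (m : ℝ) < s)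
    (hα0 : 0 < α) (hα1 : α ≤ 1) :
    ∃ c : ℝ, 0 < c ∧
      ∀ (μ : Measure (EuclideanSpace ℝ (Fin n))) [IsFiniteMeasure μ],
        ENNReal.ofReal s ≤ measDimH μ →
        ∀ᵐ x ∂μ, ENNReal.ofReal c <
          limsup (fun r : ℝ =>
            ⨅ (θ : sphere (0 : EuclideanSpace ℝ (Fin n)) 1)
              (V : Submodule ℝ (EuclideanSpace ℝ (Fin n)))
              (_ : Module.finrank ℝ V = n - m),
              μ ((closedBall x r ∩ coneX x V α) \ almostHalfSpace x θ α)
                / μ (closedBall x r))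
            (nhdsWithin 0 (Set.Ioi 0)) := by
  obtain ⟨c, hc, h⟩ := stmt10_general n m hm s α hs hα0
  exact ⟨c, hc, fun μ _ => h μ⟩
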